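/- Let D ⊂ P_2(ℝ^d) be closed under contractions, meaning λ_#μ ∈ D whenever μ ∈ D and λ ∈ (0,1), where λ_#μ is the pushforward of μ by x ↦ λx. Then for every ν ∈ P_{2,0}(ℝ^d) and every μ ∈ D with μ ≠ δ_0 and μ ≼_K ν, there exists a sequence (μ_n) ⊂ D with W_2(μ_n, μ) → 0 and D(μ_n, ν) > 0 for all n, where D(μ,ν) = sup_{π∈Π(μ,ν)} ∫⟨x, y − x⟩ dπ(x,y). That is, D is approachable from the interior with respect to ν. -/

import Mathlib

/-!
The approximating sequence is `μ_n = (c_n)_# μ` with `c_n = 1 - 1/(n+2)`.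

Let `π` be a coupling of `μ` and `ν` witnessing `μ ≼_K ν`; since `ν` is centered this says
`∫ ⟨x, y⟩ dπ = ∫ |x|² dμ`. The image of `π` under `(x, y) ↦ (c x, y)` couples `c_# μ` with `ν`,
and its cost is `c ∫ ⟨x, y⟩ dπ - c² ∫ |x|² dμ = c (1 - c) ∫ |x|² dμ`, which is positive because
`μ ≠ δ₀` (`second_moment_pos`). The supremum defining `D(c_# μ, ν)` is over a set bounded by
`∫ |y|² dν` (`bddAbove_cost`), so it is at least this value. Convergence follows from the
coupling `(c x, x)_# μ`, which gives `W₂(c_# μ, μ)² ≤ (1 - c)² ∫ |x|² dμ` (`W2sq_dilation_le`).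
-/

open MeasureTheory Filter
open scoped RealInnerProductSpace Topology

noncomputable section

/-- `Rd d` is the Euclidean space `ℝ^d`. -/
abbrev Rd (d : ℕ) := EuclideanSpace ℝ (Fin d)

/-- A measure has finite second moment if `x ↦ ‖x‖²` is integrable. -/
def FiniteSecondMoment {d : ℕ} (μ : Measure (Rd d)) : Prop :=
  Integrable (fun x => ‖x‖ ^ 2) μ

/-- `π` is a coupling of `μ` and `ν` if its marginals are `μ` and `ν`. -/
def IsCoupling {d : ℕ} (π : Measure (Rd d × Rd d)) (μ ν : Measure (Rd d)) : Prop :=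
  π.map Prod.fst = μ ∧ π.map Prod.snd = ν

/-- The squared 2-Wasserstein distance: `W₂²(μ,ν) = inf_{π ∈ Π(μ,ν)} ∫ |x-y|² dπ`. -/
def W2sq {d : ℕ} (μ ν : Measure (Rd d)) : ℝ :=
  sInf ((fun π : Measure (Rd d × Rd d) => ∫ p, ‖p.1 - p.2‖ ^ 2 ∂π) ''
    {π | IsCoupling π μ ν})

/-- The 2-Wasserstein distance. -/
def W2 {d : ℕ} (μ ν : Measure (Rd d)) : ℝ := Real.sqrt (W2sq μ ν)

/-- The variance of a measure: `Var(μ) = ∫ |x - ∫ x dμ|² dμ(x)`. -/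
def Var {d : ℕ} (μ : Measure (Rd d)) : ℝ := ∫ x, ‖x - ∫ y, y ∂μ‖ ^ 2 ∂μ

/-- Convex order: `μ ≤_c ν` iff `∫ f dμ ≤ ∫ f dν` for every (integrable) convex `f`. -/
def ConvexOrder {d : ℕ} (μ ν : Measure (Rd d)) : Prop :=
  ∀ f : Rd d → ℝ, ConvexOn ℝ Set.univ f → Integrable f μ → Integrable f ν →
    ∫ x, f x ∂μ ≤ ∫ x, f x ∂ν

/-- Kantorovich dominance: `μ ≼_K ν` iff there is a coupling `π` of `μ` and `ν` with
`∫ ⟨x - b_ν, y - x⟩ dπ = 0`, where `b_ν` is the barycenter of `ν`. -/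
def KDom {d : ℕ} (μ ν : Measure (Rd d)) : Prop :=
  ∃ π : Measure (Rd d × Rd d), IsCoupling π μ ν ∧
    (∫ p : Rd d × Rd d, ⟪p.1 - ∫ y, y ∂ν, p.2 - p.1⟫ ∂π) = 0

/-- `D(μ,ν) = sup_{π ∈ Π(μ,ν)} ∫ ⟨x, y - x⟩ dπ(x,y)` (for centered `ν`). -/
def Dval {d : ℕ} (μ ν : Measure (Rd d)) : ℝ :=
  sSup ((fun π : Measure (Rd d × Rd d) => ∫ p : Rd d × Rd d, ⟪p.1, p.2 - p.1⟫ ∂π) ''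
    {π | IsCoupling π μ ν})

section Couplings

variable {d : ℕ} {μ ν : Measure (Rd d)} {π : Measure (Rd d × Rd d)}

lemma IsCoupling.integrable_fst (h : IsCoupling π μ ν) (hμ : FiniteSecondMoment μ) :
    Integrable (fun p : Rd d × Rd d => ‖p.1‖ ^ 2) π := by
  have h1 := hμ
  rw [FiniteSecondMoment, ← h.1] at h1
  exact h1.comp_measurable measurable_fst

lemma IsCoupling.integrable_snd (h : IsCoupling π μ ν) (hν : FiniteSecondMoment ν) :
    Integrable (fun p : Rd d × Rd d => ‖p.2‖ ^ 2) π := by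
  have h1 := hν
  rw [FiniteSecondMoment, ← h.2] at h1
  exact h1.comp_measurable measurable_snd

lemma IsCoupling.integral_fst (h : IsCoupling π μ ν) :
    ∫ p, ‖p.1‖ ^ 2 ∂π = ∫ x, ‖x‖ ^ 2 ∂μ := by
  rw [← h.1, integral_map measurable_fst.aemeasurable]
  exact (by fun_prop : Continuous fun x : Rd d => ‖x‖ ^ 2).aestronglyMeasurable

lemma IsCoupling.integral_snd (h : IsCoupling π μ ν) :
    ∫ p, ‖p.2‖ ^ 2 ∂π = ∫ x, ‖x‖ ^ 2 ∂ν := by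
  rw [← h.2, integral_map measurable_snd.aemeasurable]
  exact (by fun_prop : Continuous fun x : Rd d => ‖x‖ ^ 2).aestronglyMeasurable

lemma IsCoupling.integrable_inner (h : IsCoupling π μ ν) (hμ : FiniteSecondMoment μ)
    (hν : FiniteSecondMoment ν) :
    Integrable (fun p : Rd d × Rd d => ⟪p.1, p.2⟫) π := by
  refine ((h.integrable_fst hμ).add (h.integrable_snd hν)).mono'
    (by fun_prop : Continuous fun p : Rd d × Rd d => ⟪p.1, p.2⟫).aestronglyMeasurable
    (ae_of_all _ fun p => ?_)
  have h1 := norm_inner_le_norm (𝕜 := ℝ) p.1 p.2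
  simp only [Pi.add_apply]
  nlinarith [sq_nonneg (‖p.1‖ - ‖p.2‖), sq_nonneg (‖p.1‖), sq_nonneg (‖p.2‖)]

lemma IsCoupling.integrable_cost (h : IsCoupling π μ ν) (hμ : FiniteSecondMoment μ)
    (hν : FiniteSecondMoment ν) :
    Integrable (fun p : Rd d × Rd d => ⟪p.1, p.2 - p.1⟫) π := by
  simp only [inner_sub_right, real_inner_self_eq_norm_sq]
  exact (h.integrable_inner hμ hν).sub (h.integrable_fst hμ)

lemma bddAbove_cost (hμ : FiniteSecondMoment μ) (hν : FiniteSecondMoment ν) :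
    BddAbove ((fun π : Measure (Rd d × Rd d) => ∫ p : Rd d × Rd d, ⟪p.1, p.2 - p.1⟫ ∂π) ''
      {π | IsCoupling π μ ν}) := by
  refine ⟨∫ y, ‖y‖ ^ 2 ∂ν, ?_⟩
  rintro _ ⟨π, hπ, rfl⟩
  have hπ : IsCoupling π μ ν := hπ
  rw [← hπ.integral_snd]
  refine integral_mono (hπ.integrable_cost hμ hν) (hπ.integrable_snd hν) fun p => ?_
  have h1 := real_inner_le_norm p.1 p.2
  simp only [inner_sub_right, real_inner_self_eq_norm_sq]
  nlinarith [sq_nonneg (‖p.1‖ - ‖p.2‖), sq_nonneg (‖p.1‖), sq_nonneg (‖p.2‖)]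

lemma second_moment_pos [IsProbabilityMeasure μ] (hμ : FiniteSecondMoment μ)
    (hne : μ ≠ Measure.dirac 0) : 0 < ∫ x, ‖x‖ ^ 2 ∂μ := by
  have h0 : 0 ≤ ∫ x, ‖x‖ ^ 2 ∂μ := integral_nonneg fun x => by positivity
  refine lt_of_le_of_ne h0 fun h => hne ?_
  have h1 := (integral_eq_zero_iff_of_nonneg (fun x => by positivity) hμ).1 h.symm
  have h2 : (fun x : Rd d => x) =ᵐ[μ] fun _ => 0 := by
    filter_upwards [h1] with x hx
    simpa using hx
  calc μ = μ.map fun x => x := Measure.map_id.symm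
    _ = μ.map fun _ => 0 := Measure.map_congr h2
    _ = Measure.dirac 0 := by simp

lemma FiniteSecondMoment.dilation (hμ : FiniteSecondMoment μ) (c : ℝ) :
    FiniteSecondMoment (μ.map fun x => c • x) := by
  have hc : Continuous fun x : Rd d => c • x := by fun_prop
  rw [FiniteSecondMoment, integrable_map_measure
    (by fun_prop : Continuous fun x : Rd d => ‖x‖ ^ 2).aestronglyMeasurable
    hc.measurable.aemeasurable]
  refine (hμ.const_mul (c ^ 2)).congr (ae_of_all _ fun x => ?_)
  simp [norm_smul, mul_pow]

lemma IsCoupling.dilation (h : IsCoupling π μ ν) (c : ℝ) :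
    IsCoupling (π.map fun p => (c • p.1, p.2)) (μ.map fun x => c • x) ν := by
  have hm : Measurable fun p : Rd d × Rd d => (c • p.1, p.2) :=
    (by fun_prop : Continuous fun p : Rd d × Rd d => (c • p.1, p.2)).measurable
  have hc : Measurable fun x : Rd d => c • x :=
    (by fun_prop : Continuous fun x : Rd d => c • x).measurable
  constructor
  · rw [Measure.map_map measurable_fst hm, ← h.1, Measure.map_map hc measurable_fst]
    rfl
  · rw [Measure.map_map measurable_snd hm, ← h.2]
    rfl

lemma W2sq_nonneg : 0 ≤ W2sq μ ν := by
  apply Real.sInf_nonneg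
  rintro _ ⟨π, -, rfl⟩
  exact integral_nonneg fun p => by positivity

lemma W2sq_dilation_le (c : ℝ) :
    W2sq (μ.map fun x => c • x) μ ≤ (1 - c) ^ 2 * ∫ x, ‖x‖ ^ 2 ∂μ := by
  have hm : Measurable fun x : Rd d => (c • x, x) :=
    (by fun_prop : Continuous fun x : Rd d => (c • x, x)).measurable
  refine csInf_le ⟨0, ?_⟩ ⟨μ.map fun x => (c • x, x), ⟨?_, ?_⟩, ?_⟩
  · rintro _ ⟨π, -, rfl⟩
    exact integral_nonneg fun p => by positivity
  · rw [Measure.map_map measurable_fst hm]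
    rfl
  · rw [Measure.map_map measurable_snd hm]
    exact Measure.map_id
  · dsimp only
    rw [integral_map hm.aemeasurable
      (by fun_prop : Continuous fun p : Rd d × Rd d => ‖p.1 - p.2‖ ^ 2).aestronglyMeasurable,
      ← integral_const_mul]
    refine integral_congr_ae (ae_of_all _ fun x => ?_)
    have h1 : c • x - x = (c - 1) • x := by rw [sub_smul, one_smul]
    simp only [h1, norm_smul, mul_pow, Real.norm_eq_abs, sq_abs]
    ring

lemma Dval_dilation_pos [IsProbabilityMeasure μ] (hμ : FiniteSecondMoment μ)
    (hν : FiniteSecondMoment ν) (hne : μ ≠ Measure.dirac 0) (h : IsCoupling π μ ν)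
    (h0 : ∫ p : Rd d × Rd d, ⟪p.1, p.2 - p.1⟫ ∂π = 0) {c : ℝ} (hc0 : 0 < c) (hc1 : c < 1) :
    0 < Dval (μ.map fun x => c • x) ν := by
  refine lt_of_lt_of_le ?_
    (le_csSup (bddAbove_cost (hμ.dilation c) hν) ⟨_, h.dilation c, rfl⟩)
  have hpos := second_moment_pos hμ hne
  have hm : Measurable fun p : Rd d × Rd d => (c • p.1, p.2) :=
    (by fun_prop : Continuous fun p : Rd d × Rd d => (c • p.1, p.2)).measurable
  dsimp only
  rw [integral_map hm.aemeasurable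
    (by fun_prop : Continuous fun p : Rd d × Rd d => ⟪p.1, p.2 - p.1⟫).aestronglyMeasurable]
  have hEq : ∀ p : Rd d × Rd d, ⟪c • p.1, p.2 - c • p.1⟫
      = c * ⟪p.1, p.2 - p.1⟫ + c * (1 - c) * ‖p.1‖ ^ 2 := fun p => by
    simp only [inner_sub_right, real_inner_smul_left, real_inner_self_eq_norm_sq, norm_smul, mul_pow,
      Real.norm_eq_abs, sq_abs]
    ring
  simp only [hEq]
  rw [integral_add ((h.integrable_cost hμ hν).const_mul _) ((h.integrable_fst hμ).const_mul _),
    integral_const_mul, integral_const_mul, h0, h.integral_fst]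
  have : 0 < 1 - c := sub_pos.2 hc1
  positivity

end Couplings

/-- If `D` is closed under contractions, then `D` is approachable from the interior with
respect to any `ν ∈ P_{2,0}(ℝ^d)`: for every `μ ∈ D` with `μ ≠ δ₀` and `μ ≼_K ν` there is a
sequence `(μ_n) ⊆ D` with `W₂(μ_n, μ) → 0` and `D(μ_n, ν) > 0` for all `n`. -/
theorem stmt_14 {d : ℕ} (D : Set (Measure (Rd d)))
    (hD : ∀ ρ ∈ D, IsProbabilityMeasure ρ ∧ FiniteSecondMoment ρ)
    (hcontr : ∀ μ ∈ D, ∀ c : ℝ, 0 < c → c < 1 → μ.map (fun x => c • x) ∈ D)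
    (ν : Measure (Rd d)) [IsProbabilityMeasure ν] (hν2 : FiniteSecondMoment ν)
    (hν0 : (∫ y, y ∂ν) = 0)
    (μ : Measure (Rd d)) (hμD : μ ∈ D) (hμne : μ ≠ Measure.dirac 0) (hμK : KDom μ ν) :
    ∃ μs : ℕ → Measure (Rd d), (∀ n, μs n ∈ D) ∧
      Tendsto (fun n => W2 (μs n) μ) atTop (𝓝 0) ∧ ∀ n, 0 < Dval (μs n) ν := by
  obtain ⟨hμp, hμ2⟩ := hD μ hμD
  obtain ⟨π, hπ, h0⟩ := hμK
  simp only [hν0, sub_zero] at h0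
  have hc0 : ∀ n : ℕ, 0 < 1 - 1 / ((n : ℝ) + 2) := fun n => by
    rw [sub_pos, div_lt_one (by positivity)]
    linarith [n.cast_nonneg (α := ℝ)]
  have hc1 : ∀ n : ℕ, 1 - 1 / ((n : ℝ) + 2) < 1 := fun n => sub_lt_self _ (by positivity)
  refine ⟨fun n => μ.map fun x => (1 - 1 / ((n : ℝ) + 2)) • x,
    fun n => hcontr μ hμD _ (hc0 n) (hc1 n), ?_,
    fun n => Dval_dilation_pos hμ2 hν2 hμne hπ h0 (hc0 n) (hc1 n)⟩
  have hlim : Tendsto (fun n : ℕ => 1 / ((n : ℝ) + 2)) atTop (𝓝 0) :=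
    tendsto_const_nhds.div_atTop
      (tendsto_atTop_add_const_right _ _ tendsto_natCast_atTop_atTop)
  have hsq : Tendsto (fun n : ℕ => W2sq (μ.map fun x => (1 - 1 / ((n : ℝ) + 2)) • x) μ)
      atTop (𝓝 0) := by
    refine squeeze_zero (fun n => W2sq_nonneg) (fun n => W2sq_dilation_le _) ?_
    simpa using (hlim.pow 2).mul_const (∫ x, ‖x‖ ^ 2 ∂μ)
  simpa [W2] using hsq.sqrt
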